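/- arXiv:1609.03036 — 3 statements merged into one kernel-verified Lean document; each statement's English description precedes it below -/
import Mathlib

section
/- For every real number x with 0 < |x| < 1, the Clausen-type series ∑_{n=1}^∞ cos(2πnx)/n³ equals ζ(3) − 3π²x² + 2π²x²·log(2π|x|) − 8π² ∑_{n=1}^∞ ζ(2n)/(2n(2n+1)(2n+2)) · x^{2n+2}. -/
/-!
Put `q = e^{2πiz}` and work in the upper half of the unit disc, where `∑ qⁿ / n³` is holomorphic with
second derivative `4π² log (1 - q)`. The partial fraction expansion of the cotangent gives
`π cot πz = 1/z - 2 ∑ ζ(2n) z^(2n-1)` (`pi_cot_eq`), and integrating it once yields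
`log (1 - q) = log (-2πiz) + πiz - ∑ ζ(2n)/n z^(2n)`, the constant being found by letting `z → 0`
along the imaginary axis (`logDefect_eq_zero`).

Integrating twice more term by term, `∑ qⁿ / n³` agrees with
`ζ(3) - 3π²z² + 2π²z² log (-2πiz) + (2/3)π³i z³ - 8π² ∑ ζ(2n)/(2n(2n+1)(2n+2)) z^(2n+2)`
up to an affine function `a + b z` (`defect_affine`). Both sides extend continuously to the real
diameter and agree at `0`, so `a = 0` (`defect_real`). On the diameter, the real part of the difference
is the difference of the two sides of the theorem (`defect_re`), an even function of `x`; being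
equal to `Re b * x`, it vanishes.
-/

open Real

/-- The Riemann zeta function, as a real-valued function of a real argument. -/
noncomputable def zetaR (s : ℝ) : ℝ := (riemannZeta s).re

/-! ### Zeta values and the cotangent expansion -/

lemma hasSum_zetaR (m : ℕ) (hm : 2 ≤ m) :
    HasSum (fun k : ℕ => 1 / ((k : ℝ) + 1) ^ m) (zetaR m) := by
  have hs : Summable (fun k : ℕ => 1 / ((k : ℝ) + 1) ^ m) := by
    have := (summable_nat_add_iff 1).2 (Real.summable_one_div_nat_pow.2 (show 1 < m by omega))
    simpa using this
  have h : riemannZeta ((m : ℝ) : ℂ) = ((∑' k : ℕ, 1 / ((k : ℝ) + 1) ^ m : ℝ) : ℂ) := by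
    rw [zeta_eq_tsum_one_div_nat_add_one_cpow]
    · push_cast
      simp only [Complex.cpow_natCast]
    · simp only [Complex.ofReal_re]
      exact_mod_cast hm
  rw [zetaR, h, Complex.ofReal_re]
  exact hs.hasSum

lemma hasSum_zetaR_even (n : ℕ) :
    HasSum (fun k : ℕ => 1 / ((k : ℝ) + 1) ^ (2 * n + 2)) (zetaR (2 * (n + 1))) := by
  have := hasSum_zetaR (2 * n + 2) (by omega)
  convert this using 2
  push_cast; ring

lemma norm_zetaR_even_le (n : ℕ) : ‖(zetaR (2 * (n + 1)) : ℂ)‖ ≤ zetaR 2 := by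
  have h := hasSum_zetaR_even n
  have h2 : HasSum (fun k : ℕ => 1 / ((k : ℝ) + 1) ^ 2) (zetaR 2) := by
    simpa using hasSum_zetaR 2 le_rfl
  rw [Complex.norm_real, Real.norm_of_nonneg (h.nonneg fun k => by positivity)]
  refine hasSum_le (fun k => ?_) h h2
  gcongr
  · have : (0 : ℝ) ≤ k := k.cast_nonneg
    linarith
  · omega

/-- Termwise differentiation in the unit disc of a possibly lacunary power series whose derivative
has bounded coefficients. -/
lemma hasDerivAt_powSeries (a : ℕ → ℂ) (C : ℝ) (ha : ∀ n, ‖a n‖ ≤ C) (m : ℕ → ℕ)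
    (hm : ∀ n, n ≤ m n) {z : ℂ} (hz : ‖z‖ < 1) :
    HasDerivAt (fun w => ∑' n, a n / (m n + 1) * w ^ (m n + 1)) (∑' n, a n * z ^ m n) z := by
  obtain ⟨r, hr, hr1⟩ := exists_between hz
  have hr0 : 0 ≤ r := (norm_nonneg z).trans hr.le
  have hC : 0 ≤ C := (norm_nonneg _).trans (ha 0)
  refine hasDerivAt_tsum_of_isPreconnected (t := Metric.ball 0 r) (y₀ := 0)
    (g := fun n w => a n / (m n + 1) * w ^ (m n + 1)) (g' := fun n w => a n * w ^ m n)
    ((summable_geometric_of_lt_one hr0 hr1).mul_left C) Metric.isOpen_ball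
    (convex_ball _ _).isPreconnected (fun n w _ => ?_) (fun n w hw => ?_)
    (by simpa using (norm_nonneg z).trans_lt hr) (by simp [summable_zero]) (by simpa using hr)
  · have h := (hasDerivAt_pow (m n + 1) w).const_mul (a n / (m n + 1))
    refine h.congr_deriv ?_
    have : (m n + 1 : ℂ) ≠ 0 := by exact_mod_cast (m n).succ_ne_zero
    rw [Nat.add_sub_cancel]
    push_cast
    field_simp
  · have hw : ‖w‖ ≤ r := by simpa using (mem_ball_zero_iff.1 hw).le
    rw [norm_mul, norm_pow]
    have : ‖w‖ ^ m n ≤ r ^ n :=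
      (pow_le_pow_left₀ (norm_nonneg w) hw _).trans (pow_le_pow_of_le_one hr0 hr1.le (hm n))
    gcongr
    exact ha n

lemma norm_nat_add_one (k : ℕ) : ‖((k : ℂ) + 1)‖ = (k : ℝ) + 1 := by
  have : ((k : ℂ) + 1) = ((k + 1 : ℕ) : ℂ) := by push_cast; rfl
  rw [this, Complex.norm_natCast]; push_cast; rfl

/-- The expansion `π cot πz = 1/z - 2 ∑ ζ(2n+2) z^(2n+1)`, obtained from the Mittag-Leffler series by
expanding each term geometrically and exchanging the two sums. -/
lemma pi_cot_eq {z : ℂ} (hz : 0 < z.im) (hz1 : ‖z‖ < 1) :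
    π * Complex.cot (π * z) - 1 / z =
      -2 * ∑' n : ℕ, (zetaR (2 * (n + 1)) : ℂ) * z ^ (2 * n + 1) := by
  have hc := cot_series_rep' (UpperHalfPlane.coe_mem_integerComplement ⟨z, hz⟩)
  simp only at hc
  rw [hc]
  have hk (k : ℕ) : 1 / (z - (k + 1)) + 1 / (z + (k + 1)) =
      ∑' n : ℕ, -2 * (z ^ (2 * n + 1) / ((k : ℂ) + 1) ^ (2 * n + 2)) := by
    have hk0 : ((k : ℂ) + 1) ≠ 0 := by exact_mod_cast k.succ_ne_zero
    have hkn : (1 : ℝ) ≤ ‖((k : ℂ) + 1)‖ := by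
      rw [norm_nat_add_one]; exact le_add_of_nonneg_left k.cast_nonneg
    have hlt : ‖(z / (k + 1)) ^ 2‖ < 1 := by
      rw [norm_pow, norm_div]
      refine pow_lt_one₀ (by positivity) ?_ two_ne_zero
      rw [div_lt_one (by linarith)]; linarith
    have hsum := ((hasSum_geometric_of_norm_lt_one hlt).mul_left
      (-2 * (z / ((k : ℂ) + 1) ^ 2))).tsum_eq
    have e1 : z - (k + 1) ≠ 0 := fun h => by
      have := congrArg Complex.im h; simp at this; exact hz.ne' this
    have e2 : z + (k + 1) ≠ 0 := fun h => by
      have := congrArg Complex.im h; simp at this; exact hz.ne' this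
    have e3 : 1 - (z / ((k : ℂ) + 1)) ^ 2 = -((z - (k + 1)) * (z + (k + 1))) / (k + 1) ^ 2 := by
      field_simp; ring
    calc _ = -2 * (z / ((k : ℂ) + 1) ^ 2) * (1 - (z / ((k : ℂ) + 1)) ^ 2)⁻¹ := by
          rw [e3]; field_simp; ring
      _ = _ := by
          rw [← hsum]
          refine tsum_congr fun n => ?_
          rw [div_pow, div_pow, ← pow_mul, ← pow_mul, pow_succ, pow_add _ (2 * n) 2]
          field_simp
          ring
  simp_rw [hk, tsum_mul_left]
  congr 1
  rw [Summable.tsum_comm]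
  · refine tsum_congr fun n => ?_
    have := Complex.hasSum_ofReal.2 (hasSum_zetaR_even n)
    rw [← this.tsum_eq, ← tsum_mul_right]
    refine tsum_congr fun k => ?_
    push_cast
    ring
  · -- The double series is dominated by `‖z‖ ^ n / (k + 1) ^ 2`.
    have h2 : Summable (fun k : ℕ => 1 / ((k : ℝ) + 1) ^ 2) := (hasSum_zetaR 2 le_rfl).summable
    have hp := (summable_geometric_of_lt_one (norm_nonneg z) hz1).mul_of_nonneg h2
      (fun k => by positivity) (fun k => by positivity)
    refine Summable.of_norm_bounded hp ?_
    rintro ⟨n, k⟩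
    simp only [Function.uncurry]
    rw [norm_div, norm_pow, norm_pow, norm_nat_add_one, div_eq_mul_one_div]
    have hk1 : (1 : ℝ) ≤ (k : ℝ) + 1 := le_add_of_nonneg_left k.cast_nonneg
    refine mul_le_mul ?_ ?_ (by positivity) (by positivity)
    · exact pow_le_pow_of_le_one (norm_nonneg z) hz1.le (by omega)
    · gcongr
      · omega

/-! ### The polylogarithm on the upper half plane -/

/-- The polylogarithm `Li_k (e^{2πiz})`, as a series. -/
noncomputable def polyL (k : ℕ) (z : ℂ) : ℂ :=
  ∑' n : ℕ, Complex.exp (2 * π * Complex.I * z) ^ (n + 1) / ((n : ℂ) + 1) ^ k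

lemma norm_exp_eq (z : ℂ) :
    ‖Complex.exp (2 * π * Complex.I * z)‖ = Real.exp (-(2 * π * z.im)) := by
  rw [Complex.norm_exp]
  congr 1
  simp

lemma norm_exp_lt_one {z : ℂ} (hz : 0 < z.im) : ‖Complex.exp (2 * π * Complex.I * z)‖ < 1 := by
  rw [norm_exp_eq, Real.exp_lt_one_iff]
  have := mul_pos Real.two_pi_pos hz
  linarith

lemma hasDerivAt_polyL (k : ℕ) {z : ℂ} (hz : 0 < z.im) :
    HasDerivAt (polyL (k + 1)) (2 * π * Complex.I * polyL k z) z := by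
  have h := hasDerivAt_powSeries (fun n => 1 / ((n : ℂ) + 1) ^ k) 1 (fun n => by
    rw [norm_div, norm_one, norm_pow, norm_nat_add_one]
    exact div_le_one_of_le₀ (one_le_pow₀ (le_add_of_nonneg_left n.cast_nonneg)) (by positivity))
    (fun n => n) (fun n => le_rfl) (norm_exp_lt_one hz)
  have he : HasDerivAt (fun w : ℂ => Complex.exp (2 * π * Complex.I * w))
      (Complex.exp (2 * π * Complex.I * z) * (2 * π * Complex.I * 1)) z :=
    ((hasDerivAt_id z).const_mul _).cexp
  have hc := HasDerivAt.comp z h he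
  have e : polyL (k + 1) = (fun w => ∑' n : ℕ, 1 / ((n : ℂ) + 1) ^ k / (n + 1) * w ^ (n + 1)) ∘
      (fun w : ℂ => Complex.exp (2 * π * Complex.I * w)) := by
    ext w
    refine tsum_congr fun n => ?_
    rw [div_div, ← pow_succ, div_mul_eq_mul_div, one_mul]
  rw [e]
  refine hc.congr_deriv ?_
  rw [polyL, ← tsum_mul_left, ← tsum_mul_right]
  refine tsum_congr fun n => ?_
  ring

lemma polyL_zero {z : ℂ} (hz : 0 < z.im) : polyL 0 z =
    Complex.exp (2 * π * Complex.I * z) / (1 - Complex.exp (2 * π * Complex.I * z)) := by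
  have := ((hasSum_geometric_of_norm_lt_one (norm_exp_lt_one hz)).mul_left
    (Complex.exp (2 * π * Complex.I * z))).tsum_eq
  rw [div_eq_mul_inv, ← this, polyL]
  refine tsum_congr fun n => ?_
  rw [pow_zero, div_one, pow_succ']

lemma polyL_one_I {t : ℝ} (ht : 0 < t) :
    polyL 1 (t * Complex.I) = -((Real.log (1 - Real.exp (-(2 * π * t))) : ℝ) : ℂ) := by
  have e : Complex.exp (2 * π * Complex.I * (t * Complex.I)) = (Real.exp (-(2 * π * t)) : ℝ) := by
    rw [Complex.ofReal_exp]
    congr 1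
    push_cast
    linear_combination (2 * π * t : ℂ) * Complex.I_mul_I
  have hlt : ‖((Real.exp (-(2 * π * t)) : ℝ) : ℂ)‖ < 1 := by
    rw [← e]; exact norm_exp_lt_one (by simpa using ht)
  have hlt' : Real.exp (-(2 * π * t)) < 1 := by
    rwa [Complex.norm_real, Real.norm_of_nonneg (Real.exp_pos _).le] at hlt
  have h := Complex.hasSum_taylorSeries_neg_log hlt
  rw [← hasSum_nat_add_iff' 1] at h
  simp only [Finset.sum_range_one, pow_zero, Nat.cast_zero, div_zero, sub_zero] at h
  rw [Complex.ofReal_log (by linarith), Complex.ofReal_sub, Complex.ofReal_one, ← h.tsum_eq, polyL]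
  refine tsum_congr fun n => ?_
  rw [e]; push_cast; rw [pow_one]

/-! ### The zeta power series -/

/-- The coefficient `ζ(2n+2)`, as a complex number. -/
noncomputable def zetaCoeff (n : ℕ) : ℂ := (zetaR (2 * (n + 1)) : ℂ)

/-- The series `∑ ζ(2n+2)/(2n+2) z^(2n+2)`, which is `-½ log (sin πz / (πz))`. The casts and
exponents follow the shape produced by `hasDerivAt_powSeries`. -/
noncomputable def zetaSeriesDerivTwo (z : ℂ) : ℂ :=
  ∑' n : ℕ, zetaCoeff n / ((2 * n + 1 : ℕ) + 1) * z ^ (2 * n + 1 + 1)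

/-- The antiderivative of `zetaSeriesDerivTwo` vanishing at `0`. -/
noncomputable def zetaSeriesDeriv (z : ℂ) : ℂ :=
  ∑' n : ℕ, zetaCoeff n / ((2 * n + 1 : ℕ) + 1) / ((2 * n + 2 : ℕ) + 1) * z ^ (2 * n + 2 + 1)

/-- The antiderivative of `zetaSeriesDeriv` vanishing at `0`: the series of the theorem, for
complex argument. -/
noncomputable def zetaSeries (z : ℂ) : ℂ :=
  ∑' n : ℕ, zetaCoeff n / ((2 * n + 1 : ℕ) + 1) / ((2 * n + 2 : ℕ) + 1) / ((2 * n + 3 : ℕ) + 1) *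
    z ^ (2 * n + 3 + 1)

lemma norm_div_nat_le {a : ℂ} {C : ℝ} (h : ‖a‖ ≤ C) (m : ℕ) : ‖a / (m + 1)‖ ≤ C := by
  rw [norm_div, norm_nat_add_one]
  exact (div_le_self (norm_nonneg a) (le_add_of_nonneg_left m.cast_nonneg)).trans h

lemma hasDerivAt_zetaSeriesDerivTwo {z : ℂ} (hz : ‖z‖ < 1) :
    HasDerivAt zetaSeriesDerivTwo (∑' n : ℕ, zetaCoeff n * z ^ (2 * n + 1)) z :=
  hasDerivAt_powSeries zetaCoeff (zetaR 2) norm_zetaR_even_le (fun n => 2 * n + 1)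
    (fun n => by omega) hz

lemma hasDerivAt_zetaSeriesDeriv {z : ℂ} (hz : ‖z‖ < 1) :
    HasDerivAt zetaSeriesDeriv (zetaSeriesDerivTwo z) z :=
  hasDerivAt_powSeries (fun n => zetaCoeff n / ((2 * n + 1 : ℕ) + 1)) (zetaR 2)
    (fun n => norm_div_nat_le (norm_zetaR_even_le n) _) (fun n => 2 * n + 2) (fun n => by omega) hz

lemma hasDerivAt_zetaSeries {z : ℂ} (hz : ‖z‖ < 1) : HasDerivAt zetaSeries (zetaSeriesDeriv z) z :=
  hasDerivAt_powSeries (fun n => zetaCoeff n / ((2 * n + 1 : ℕ) + 1) / ((2 * n + 2 : ℕ) + 1))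
    (zetaR 2)
    (fun n => norm_div_nat_le (norm_div_nat_le (norm_zetaR_even_le n) _) _)
    (fun n => 2 * n + 3) (fun n => by omega) hz

/-! ### The logarithmic identity on the upper half disc -/

/-- The open upper half of the unit disc. -/
def upperHalfDisc : Set ℂ := {z | 0 < z.im} ∩ Metric.ball 0 1

lemma mem_upperHalfDisc {z : ℂ} : z ∈ upperHalfDisc ↔ 0 < z.im ∧ ‖z‖ < 1 := by simp [upperHalfDisc]

lemma isOpen_upperHalfDisc : IsOpen upperHalfDisc :=
  (isOpen_lt continuous_const Complex.continuous_im).inter Metric.isOpen_ball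

lemma isPreconnected_upperHalfDisc : IsPreconnected upperHalfDisc :=
  ((convex_halfSpace_im_gt 0).inter (convex_ball _ _)).isPreconnected

lemma eq_const {f : ℂ → ℂ} (hf : ∀ z ∈ upperHalfDisc, HasDerivAt f 0 z) :
    ∃ a, ∀ z ∈ upperHalfDisc, f z = a :=
  isOpen_upperHalfDisc.exists_is_const_of_deriv_eq_zero isPreconnected_upperHalfDisc
    (fun z hz => (hf z hz).differentiableAt.differentiableWithinAt) fun z hz => (hf z hz).deriv

/-- `log (-2πiz)`. On the upper half plane `-2πiz` has positive real part, so the principal branch is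
holomorphic there, and it extends continuously to the nonzero real numbers. -/
noncomputable def logNegTwoPiI (z : ℂ) : ℂ := Complex.log (-(2 * π * Complex.I) * z)

lemma hasDerivAt_logNegTwoPiI {z : ℂ} (hz : 0 < z.im) : HasDerivAt logNegTwoPiI (1 / z) z := by
  have hz0 : z ≠ 0 := fun h => by simp [h] at hz
  have h := ((hasDerivAt_id z).const_mul (-(2 * π * Complex.I))).clog (by
    left; simpa using mul_pos Real.two_pi_pos hz)
  refine h.congr_deriv ?_
  have := Complex.two_pi_I_ne_zero
  simp only [id]
  field_simp

lemma logNegTwoPiI_mul_I {t : ℝ} (ht : 0 < t) :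
    logNegTwoPiI (t * Complex.I) = ((Real.log (2 * π * t) : ℝ) : ℂ) := by
  rw [logNegTwoPiI, Complex.ofReal_log (mul_pos Real.two_pi_pos ht).le]
  congr 1
  push_cast
  linear_combination (-(2 * π * t) : ℂ) * Complex.I_mul_I

/-- The difference of the two sides of
`log (1 - e^{2πiz}) = log (-2πiz) + πiz - 2 ∑ ζ(2n+2)/(2n+2) z^(2n+2)`,
with the logarithm on the left replaced by its Taylor series `-Li_1`. -/
noncomputable def logDefect (z : ℂ) : ℂ :=
  -polyL 1 z - logNegTwoPiI z - π * Complex.I * z + 2 * zetaSeriesDerivTwo z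

/-- The derivative of `logDefect` vanishes because of the expansion of `π cot πz`. -/
lemma hasDerivAt_logDefect {z : ℂ} (hz : z ∈ upperHalfDisc) : HasDerivAt logDefect 0 z := by
  obtain ⟨h0, h1⟩ := mem_upperHalfDisc.1 hz
  have h := (((hasDerivAt_polyL 0 h0).neg.sub (hasDerivAt_logNegTwoPiI h0)).sub
    ((hasDerivAt_id z).const_mul (π * Complex.I))).add
    ((hasDerivAt_zetaSeriesDerivTwo h1).const_mul 2)
  refine h.congr_deriv ?_
  have hc := pi_cot_eq h0 h1
  have hq : 1 - Complex.exp (2 * π * Complex.I * z) ≠ 0 := fun h => by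
    have := norm_exp_lt_one h0
    rw [← sub_eq_zero.1 h] at this
    simp at this
  rw [Complex.cot_pi_eq_exp_ratio] at hc
  have e : (π : ℂ) * ((Complex.exp (2 * π * Complex.I * z) + 1) /
      (Complex.I * (1 - Complex.exp (2 * π * Complex.I * z)))) =
      -(2 * π * Complex.I * polyL 0 z) - π * Complex.I := by
    rw [polyL_zero h0]
    generalize Complex.exp (2 * π * Complex.I * z) = q at hq
    field_simp
    rw [Complex.I_sq]
    ring
  rw [e] at hc
  simp only [zetaCoeff]
  linear_combination hc

open Filter Topology in
lemma tendsto_logDefect : Tendsto (fun t : ℝ => logDefect (t * Complex.I)) (𝓝[>] 0) (𝓝 0) := by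
  have hP : Tendsto (fun t : ℝ => zetaSeriesDerivTwo (t * Complex.I)) (𝓝[>] 0) (𝓝 0) := by
    have h0 : zetaSeriesDerivTwo 0 = 0 := by simp [zetaSeriesDerivTwo]
    have hc : ContinuousAt (fun t : ℝ => zetaSeriesDerivTwo (t * Complex.I)) 0 := by
      refine ContinuousAt.comp (f := fun t : ℝ => (t : ℂ) * Complex.I)
        (g := zetaSeriesDerivTwo) ?_ (by fun_prop)
      simpa using (hasDerivAt_zetaSeriesDerivTwo (z := 0) (by simp)).continuousAt
    simpa [ContinuousAt, h0] using hc.tendsto.mono_left nhdsWithin_le_nhds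
  -- `(1 - e^{-2πt}) / (2πt)` tends to `1`, being a difference quotient of `-e^{-2πt}`.
  have hL : Tendsto (fun t : ℝ => Real.log ((1 - Real.exp (-(2 * π * t))) / (2 * π * t)))
      (𝓝[>] 0) (𝓝 0) := by
    have hd : HasDerivAt (fun t : ℝ => -Real.exp (-(2 * π * t)))
        (-(Real.exp (-(2 * π * 0)) * (-(2 * π * 1)))) 0 :=
      (((hasDerivAt_id (0 : ℝ)).const_mul (2 * π)).neg.exp).neg
    have hs := (hd.tendsto_slope_zero_right).div_const (2 * π)
    have hp := Real.two_pi_pos.ne'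
    have : Tendsto (fun t : ℝ => (1 - Real.exp (-(2 * π * t))) / (2 * π * t)) (𝓝[>] 0) (𝓝 1) := by
      refine Tendsto.congr' ?_ (by simpa [hp] using hs)
      filter_upwards [self_mem_nhdsWithin] with t ht
      have : t ≠ 0 := (Set.mem_Ioi.1 ht).ne'
      field_simp
      ring
    simpa using this.log one_ne_zero
  have hL' := (Complex.continuous_ofReal.tendsto 0).comp hL
  have hl : Tendsto (fun t : ℝ => ((π * t : ℝ) : ℂ)) (𝓝[>] 0) (𝓝 0) := by
    have : ContinuousAt (fun t : ℝ => ((π * t : ℝ) : ℂ)) 0 := by fun_prop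
    simpa [ContinuousAt] using this.tendsto.mono_left nhdsWithin_le_nhds
  have := (hL'.add hl).add (hP.const_mul 2)
  simp only [Complex.ofReal_zero, mul_zero, add_zero] at this
  refine this.congr' ?_
  filter_upwards [self_mem_nhdsWithin] with t ht
  have ht : 0 < t := ht
  have hpt := mul_pos Real.two_pi_pos ht
  have he : Real.exp (-(2 * π * t)) < 1 := by rw [Real.exp_lt_one_iff]; linarith
  simp only [Function.comp]
  rw [logDefect, polyL_one_I ht, logNegTwoPiI_mul_I ht, Real.log_div (by linarith) hpt.ne']
  push_cast
  linear_combination (π * t : ℂ) * Complex.I_mul_I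

open Filter Topology in
lemma eventually_mem_upperHalfDisc {x : ℝ} (hx : |x| < 1) :
    ∀ᶠ t : ℝ in 𝓝[>] 0, (x + t * Complex.I : ℂ) ∈ upperHalfDisc := by
  have hc : ContinuousAt (fun t : ℝ => ‖(x + t * Complex.I : ℂ)‖) 0 := by fun_prop
  have := (hc.tendsto.mono_left (nhdsWithin_le_nhds (s := Set.Ioi 0))).eventually_lt_const (u := 1)
    (by simpa using hx)
  filter_upwards [self_mem_nhdsWithin, this] with t ht h
  exact mem_upperHalfDisc.2 ⟨by simpa using ht, h⟩

lemma logDefect_eq_zero {z : ℂ} (hz : z ∈ upperHalfDisc) : logDefect z = 0 := by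
  obtain ⟨c, hc⟩ := eq_const fun z hz => hasDerivAt_logDefect hz
  rw [hc z hz]
  refine tendsto_nhds_unique (Filter.Tendsto.congr' ?_ tendsto_const_nhds) tendsto_logDefect
  filter_upwards [eventually_mem_upperHalfDisc (x := 0) (by simp)] with t ht
  rw [hc _ (by simpa using ht)]

/-! ### Integrating twice -/

/-- The difference of the two sides of the complex form of the identity. The cubic term is purely
imaginary on the real axis, so it does not contribute to the real identity. -/
noncomputable def defect (z : ℂ) : ℂ :=
  polyL 3 z - (zetaR 3 - 3 * π ^ 2 * z ^ 2 + 2 * π ^ 2 * (z ^ 2 * logNegTwoPiI z)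
    + 2 / 3 * π ^ 3 * Complex.I * z ^ 3 - 8 * π ^ 2 * zetaSeries z)

/-- The derivative of `defect` on the upper half disc. -/
noncomputable def defectDeriv (z : ℂ) : ℂ :=
  2 * π * Complex.I * polyL 2 z - (- 4 * π ^ 2 * z + 4 * π ^ 2 * (z * logNegTwoPiI z)
    + 2 * π ^ 3 * Complex.I * z ^ 2 - 8 * π ^ 2 * zetaSeriesDeriv z)

lemma hasDerivAt_defect {z : ℂ} (hz : z ∈ upperHalfDisc) : HasDerivAt defect (defectDeriv z) z := by
  obtain ⟨h0, h1⟩ := mem_upperHalfDisc.1 hz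
  have hz0 : z ≠ 0 := fun h => by simp [h] at h0
  have h2 := hasDerivAt_pow 2 z
  have h := (hasDerivAt_polyL 2 h0).sub ((((h2.const_mul (3 * π ^ 2 : ℂ)).const_sub
    (zetaR 3 : ℂ)).add ((h2.mul (hasDerivAt_logNegTwoPiI h0)).const_mul (2 * π ^ 2 : ℂ))).add
    ((hasDerivAt_pow 3 z).const_mul (2 / 3 * π ^ 3 * Complex.I)) |>.sub
    ((hasDerivAt_zetaSeries h1).const_mul (8 * π ^ 2 : ℂ)))
  refine h.congr_deriv ?_
  rw [defectDeriv]
  push_cast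
  field_simp
  ring

/-- The second derivative of `defect` is `4π² logDefect`, which vanishes. -/
lemma hasDerivAt_defectDeriv {z : ℂ} (hz : z ∈ upperHalfDisc) : HasDerivAt defectDeriv 0 z := by
  obtain ⟨h0, h1⟩ := mem_upperHalfDisc.1 hz
  have hz0 : z ≠ 0 := fun h => by simp [h] at h0
  have hd := hasDerivAt_id z
  have h := ((hasDerivAt_polyL 1 h0).const_mul (2 * π * Complex.I)).sub
    (((hd.const_mul (-4 * π ^ 2 : ℂ)).add
    ((hd.mul (hasDerivAt_logNegTwoPiI h0)).const_mul (4 * π ^ 2 : ℂ))).add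
    ((hasDerivAt_pow 2 z).const_mul (2 * π ^ 3 * Complex.I)) |>.sub
    ((hasDerivAt_zetaSeriesDeriv h1).const_mul (8 * π ^ 2 : ℂ)))
  refine h.congr_deriv ?_
  have hD := logDefect_eq_zero hz
  rw [logDefect] at hD
  have : z * (1 / z) = 1 := by field_simp
  simp only [id]
  push_cast
  linear_combination 4 * π ^ 2 * hD + 4 * π ^ 2 * polyL 1 z * Complex.I_sq - 4 * π ^ 2 * this

lemma defect_affine : ∃ a b : ℂ, ∀ z ∈ upperHalfDisc, defect z = a + b * z := by
  obtain ⟨b, hb⟩ := eq_const fun z hz => hasDerivAt_defectDeriv hz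
  obtain ⟨a, ha⟩ := eq_const (f := fun z => defect z - b * z) fun z hz => by
    have := (hasDerivAt_defect hz).sub ((hasDerivAt_id z).const_mul b)
    refine this.congr_deriv ?_
    rw [hb z hz]; ring
  exact ⟨a, b, fun z hz => by rw [← ha z hz]; ring⟩

/-! ### Boundary values -/

open Filter Topology in
lemma tendsto_polyL (x : ℝ) :
    Tendsto (fun t : ℝ => polyL 3 (x + t * Complex.I)) (𝓝[>] 0) (𝓝 (polyL 3 x)) := by
  have hc : ContinuousOn (polyL 3) {z | 0 ≤ z.im} := by
    refine continuousOn_tsum (u := fun n : ℕ => 1 / ((n : ℝ) + 1) ^ 3)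
      (fun n => by fun_prop) (hasSum_zetaR 3 (by norm_num)).summable fun n z hz => ?_
    rw [norm_div, norm_pow, norm_pow, norm_nat_add_one, norm_exp_eq]
    gcongr
    refine pow_le_one₀ (Real.exp_pos _).le (Real.exp_le_one_iff.2 ?_)
    have := mul_nonneg Real.two_pi_pos.le hz
    linarith
  have := (hc x (by simp)).tendsto
  refine this.comp (tendsto_nhdsWithin_iff.2 ⟨?_, ?_⟩)
  · have : ContinuousAt (fun t : ℝ => (x + t * Complex.I : ℂ)) 0 := by fun_prop
    simpa [ContinuousAt] using this.tendsto.mono_left nhdsWithin_le_nhds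
  · filter_upwards [self_mem_nhdsWithin] with t ht
    simpa using (Set.mem_Ioi.1 ht).le

open Filter Topology in
/-- At `x = 0` this uses the value `logNegTwoPiI 0 = 0`, which is harmless because of the
factor `x ^ 2`. -/
lemma tendsto_sq_mul_logNegTwoPiI (x : ℝ) :
    Tendsto (fun t : ℝ => (x + t * Complex.I : ℂ) ^ 2 * logNegTwoPiI (x + t * Complex.I)) (𝓝[>] 0)
      (𝓝 ((x : ℂ) ^ 2 * logNegTwoPiI x)) := by
  rcases eq_or_ne x 0 with rfl | hx
  · -- On the imaginary axis the function is real, equal to `-t² log (2πt)`.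
    have hr : ContinuousAt (fun t : ℝ =>
        -(t / (2 * π) * (2 * π * t * Real.log (2 * π * t)))) 0 := by
      have h2 : Continuous fun t : ℝ => 2 * π * t * Real.log (2 * π * t) :=
        Real.continuous_mul_log.comp (continuous_const.mul continuous_id)
      fun_prop
    have hr' := (Complex.continuous_ofReal.tendsto _).comp
      (hr.tendsto.mono_left (nhdsWithin_le_nhds (s := Set.Ioi 0)))
    simp only [zero_div, zero_mul, neg_zero, Complex.ofReal_zero, mul_zero] at hr'
    simp only [Complex.ofReal_zero, zero_add, ne_eq, OfNat.ofNat_ne_zero, not_false_eq_true,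
      zero_pow, zero_mul]
    refine hr'.congr' ?_
    filter_upwards [self_mem_nhdsWithin] with t ht
    have hp := Real.pi_ne_zero
    simp only [Function.comp]
    rw [logNegTwoPiI_mul_I ht, mul_pow, Complex.I_sq,
      show t / (2 * π) * (2 * π * t * Real.log (2 * π * t)) =
      t ^ 2 * Real.log (2 * π * t) by field_simp]
    push_cast
    ring
  · have hc : ContinuousAt
        (fun t : ℝ => (x + t * Complex.I : ℂ) ^ 2 * logNegTwoPiI (x + t * Complex.I)) 0 := by
      unfold logNegTwoPiI
      refine ContinuousAt.mul (by fun_prop) (ContinuousAt.clog (by fun_prop) ?_)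
      -- `-2πi x` is a nonzero purely imaginary number, hence off the branch cut.
      right
      simp [hx, Real.pi_ne_zero]
    simpa [ContinuousAt] using hc.tendsto.mono_left nhdsWithin_le_nhds

open Filter Topology in
lemma tendsto_defect {x : ℝ} (hx : |x| < 1) :
    Tendsto (fun t : ℝ => defect (x + t * Complex.I)) (𝓝[>] 0) (𝓝 (defect x)) := by
  have hp : Tendsto (fun t : ℝ => (x + t * Complex.I : ℂ)) (𝓝[>] 0) (𝓝 (x : ℂ)) := by
    have : ContinuousAt (fun t : ℝ => (x + t * Complex.I : ℂ)) 0 := by fun_prop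
    simpa [ContinuousAt] using this.tendsto.mono_left nhdsWithin_le_nhds
  have hP := ((hasDerivAt_zetaSeries (z := x) (by simpa using hx)).continuousAt.tendsto).comp hp
  exact (tendsto_polyL x).sub ((((tendsto_const_nhds.sub ((hp.pow 2).const_mul _)).add
    ((tendsto_sq_mul_logNegTwoPiI x).const_mul _)).add ((hp.pow 3).const_mul _)).sub (hP.const_mul _))

lemma defect_zero : defect 0 = 0 := by
  have h3 := Complex.hasSum_ofReal.2 (hasSum_zetaR 3 (by norm_num))
  have : polyL 3 0 = zetaR 3 := by
    have e : ((3 : ℕ) : ℝ) = 3 := by norm_num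
    rw [e] at h3
    rw [← h3.tsum_eq, polyL]
    refine tsum_congr fun n => ?_
    push_cast
    simp
  simp [defect, this, zetaSeries]

/-- By continuity up to the real diameter, `defect` is linear there; it has no constant
term as `defect 0 = 0`. -/
lemma defect_real : ∃ b : ℂ, ∀ x : ℝ, |x| < 1 → defect x = b * x := by
  obtain ⟨a, b, hab⟩ := defect_affine
  have key : ∀ x : ℝ, |x| < 1 → defect x = a + b * x := fun x hx => by
    have hc : ContinuousAt (fun t : ℝ => a + b * (x + t * Complex.I : ℂ)) 0 := by fun_prop
    have h := hc.tendsto.mono_left (nhdsWithin_le_nhds (s := Set.Ioi 0))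
    simp only [Complex.ofReal_zero, zero_mul, add_zero] at h
    refine tendsto_nhds_unique (tendsto_defect hx) (h.congr' ?_)
    filter_upwards [eventually_mem_upperHalfDisc hx] with t ht
    rw [hab _ ht]
  have ha : a = 0 := by
    have := key 0 (by simp)
    simpa [defect_zero] using this.symm
  exact ⟨b, fun x hx => by rw [key x hx, ha, zero_add]⟩

/-- On the real axis, `Re defect` is the difference of the two sides of the theorem. -/
lemma defect_re (x : ℝ) : (defect x).re =
    ∑' n : ℕ, Real.cos (2 * π * (n + 1) * x) / (n + 1) ^ 3 -
      (zetaR 3 - 3 * π ^ 2 * x ^ 2 + 2 * π ^ 2 * x ^ 2 * Real.log (2 * π * |x|) -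
        8 * π ^ 2 * ∑' n : ℕ,
          zetaR (2 * (n + 1)) /
              (2 * (n + 1) * (2 * (n + 1) + 1) * (2 * (n + 1) + 2)) *
            x ^ (2 * (n + 1) + 2)) := by
  have hL : (polyL 3 x).re = ∑' n : ℕ, Real.cos (2 * π * (n + 1) * x) / (n + 1) ^ 3 := by
    have hs : Summable fun n : ℕ =>
        Complex.exp (2 * π * Complex.I * x) ^ (n + 1) / ((n : ℂ) + 1) ^ 3 := by
      refine Summable.of_norm_bounded (hasSum_zetaR 3 (by norm_num)).summable fun n => ?_
      rw [norm_div, norm_pow, norm_pow, norm_nat_add_one, norm_exp_eq]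
      simp
    rw [polyL, Complex.re_tsum hs]
    refine tsum_congr fun n => ?_
    rw [← Complex.exp_nat_mul]
    have e1 : ((n + 1 : ℕ) : ℂ) * (2 * π * Complex.I * x) =
        ((2 * π * (n + 1) * x : ℝ) : ℂ) * Complex.I := by push_cast; ring
    have e2 : ((n : ℂ) + 1) ^ 3 = (((n + 1) ^ 3 : ℝ) : ℂ) := by push_cast; rfl
    rw [e1, e2, Complex.div_ofReal_re, Complex.exp_ofReal_mul_I_re]
  have hP : zetaSeries x = ((∑' n : ℕ, zetaR (2 * (n + 1)) /
      (2 * (n + 1) * (2 * (n + 1) + 1) * (2 * (n + 1) + 2)) * x ^ (2 * (n + 1) + 2) : ℝ) : ℂ) := by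
    rw [Complex.ofReal_tsum, zetaSeries]
    refine tsum_congr fun n => ?_
    rw [zetaCoeff, div_div, div_div]
    push_cast
    ring_nf
  have hl : (logNegTwoPiI x).re = Real.log (2 * π * |x|) := by
    rw [logNegTwoPiI, Complex.log_re]
    congr 1
    simp [abs_of_pos Real.pi_pos]
  have e : defect x = polyL 3 x - (((zetaR 3 - 3 * π ^ 2 * x ^ 2 - 8 * π ^ 2 * ∑' n : ℕ,
      zetaR (2 * (n + 1)) / (2 * (n + 1) * (2 * (n + 1) + 1) * (2 * (n + 1) + 2)) *
        x ^ (2 * (n + 1) + 2) : ℝ) : ℂ) + ((2 * π ^ 2 * x ^ 2 : ℝ) : ℂ) * logNegTwoPiI x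
      + ((2 / 3 * π ^ 3 * x ^ 3 : ℝ) : ℂ) * Complex.I) := by
    rw [defect, hP]
    generalize (∑' n : ℕ, _ : ℝ) = S
    push_cast
    ring
  rw [e, Complex.sub_re, Complex.add_re, Complex.add_re, Complex.re_ofReal_mul,
    Complex.re_ofReal_mul, Complex.ofReal_re, hL, hl, Complex.I_re]
  ring

/-- Clausen-type representation: for `0 < |x| < 1`,
`∑_{n=1}^∞ cos(2πnx)/n³ = ζ(3) − 3π²x² + 2π²x²·log(2π|x|)
  − 8π² ∑_{n=1}^∞ ζ(2n)/(2n(2n+1)(2n+2)) · x^{2n+2}`. -/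
theorem clausen_repr_zeta3 (x : ℝ) (h0 : 0 < |x|) (h1 : |x| < 1) :
    ∑' n : ℕ, Real.cos (2 * π * (n + 1) * x) / (n + 1) ^ 3 =
      zetaR 3 - 3 * π ^ 2 * x ^ 2 + 2 * π ^ 2 * x ^ 2 * Real.log (2 * π * |x|) -
        8 * π ^ 2 * ∑' n : ℕ,
          zetaR (2 * (n + 1)) /
              (2 * (n + 1) * (2 * (n + 1) + 1) * (2 * (n + 1) + 2)) *
            x ^ (2 * (n + 1) + 2) := by
  obtain ⟨b, hb⟩ := defect_real
  -- `Re (defect x) = Re b * x` is odd in `x`, while the explicit formula for it is even.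
  have hpos : (defect x).re = b.re * x := by rw [hb x h1, Complex.re_mul_ofReal]
  have hneg : (defect ((-x : ℝ) : ℂ)).re = b.re * -x := by
    rw [hb (-x) (by rwa [abs_neg]), Complex.re_mul_ofReal]
  have heven : (defect ((-x : ℝ) : ℂ)).re = (defect x).re := by
    have hpow (n : ℕ) : (-x) ^ (2 * (n + 1) + 2) = x ^ (2 * (n + 1) + 2) :=
      Even.neg_pow ⟨n + 2, by ring⟩ x
    rw [defect_re, defect_re]
    simp only [hpow, mul_neg, Real.cos_neg, abs_neg, neg_sq]
  have hzero : (defect x).re = 0 := by linarith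
  rw [defect_re] at hzero
  linarith
end

section
/- ζ(3) = π²/8 − (π²/12)·log(π/3) + (π²/3) · ∑_{n=1}^∞ ζ(2n)/(2n(2n+1)(2n+2)) · (1/6)^{2n}. -/
/-!
The proof integrates the Fourier series of `-log (2 sin (t/2))` twice. For `0 < θ ≤ π/2`,

`∑ (1 - cos nθ) / n³ = ∫₀^θ (θ - t) (-log (2 sin (t/2))) dt`   (`tsum_one_sub_cos`).

This is obtained by Abel summation: for `r < 1` the series `∑ rⁿ cos(nt) / n = -log |1 - r e^{it}|`
converges uniformly and may be integrated termwise (`hasSum_abel`), and both sides pass to the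
limit `r → 1` by dominated convergence.

On the other hand Euler's product for the sine gives
`log t - log (2 sin (t/2)) = ∑ ζ(2k)/k (t/2π)^{2k}` (`hasSum_log_sin`), and integrating this
against `θ - t` evaluates the integral as
`-θ²/2 log θ + 3θ²/4 + θ² ∑ ζ(2k) / (k(2k+1)(2k+2)) (θ/2π)^{2k}`.

At `θ = π/3` the left side is `(2/3) ζ(3)`, because
`cos (nπ/3) = (1 - 2·[2 ∣ n] - 3·[3 ∣ n] + 6·[6 ∣ n]) / 2`, whence `∑ cos (nπ/3) / n³ = ζ(3) / 3`.
-/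

open Real

open Filter Topology MeasureTheory

lemma hasSum_of_eq {f g : ℕ → ℝ} {a b : ℝ} (h : HasSum f a) (hfg : ∀ n, g n = f n) (hab : b = a) :
    HasSum g b := by
  rw [hab, funext hfg]
  exact h

lemma zetaR_hasSum {k : ℕ} (hk : 1 < k) :
    HasSum (fun n : ℕ => 1 / (n : ℝ) ^ k) (zetaR k) := by
  have hs : Summable (fun n : ℕ => 1 / (n : ℝ) ^ k) := Real.summable_one_div_nat_pow.mpr hk
  have h : zetaR k = ∑' n : ℕ, 1 / (n : ℝ) ^ k := by
    unfold zetaR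
    have := zeta_nat_eq_tsum_of_gt_one hk
    rw [Complex.ofReal_natCast, this]
    have h2 : (∑' n : ℕ, 1 / (n : ℂ) ^ k) = ((∑' n : ℕ, 1 / (n : ℝ) ^ k : ℝ) : ℂ) := by
      push_cast
      rfl
    rw [h2, Complex.ofReal_re]
  rw [h]
  exact hs.hasSum

lemma zetaR_hasSum_succ {k : ℕ} (hk : 1 < k) :
    HasSum (fun n : ℕ => 1 / ((n : ℝ) + 1) ^ k) (zetaR k) := by
  have h := (hasSum_nat_add_iff' (f := fun n : ℕ => 1 / (n : ℝ) ^ k) 1).mpr (zetaR_hasSum hk)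
  have hk0 : k ≠ 0 := by omega
  simpa [hk0] using h

/-! ### Fourier side -/

lemma re_log_series {r : ℝ} (h0 : 0 ≤ r) (h1 : r < 1) (t : ℝ) :
    HasSum (fun n : ℕ => r ^ n * Real.cos (n * t) / n)
      (-Real.log ‖1 - r * Complex.exp (t * Complex.I)‖) := by
  have hz : ‖(r : ℂ) * Complex.exp (t * Complex.I)‖ < 1 := by
    rw [norm_mul, Complex.norm_exp_ofReal_mul_I, mul_one, Complex.norm_real]
    simpa [abs_of_nonneg h0] using h1
  have h := Complex.hasSum_re (Complex.hasSum_taylorSeries_neg_log hz)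
  rw [Complex.neg_re, Complex.log_re] at h
  convert h using 2 with n
  rw [mul_pow, ← Complex.exp_nat_mul, ← Complex.ofReal_pow, ← Complex.ofReal_natCast,
    Complex.div_ofReal_re, Complex.re_ofReal_mul, ← mul_assoc, ← Complex.ofReal_mul,
    Complex.exp_ofReal_mul_I_re]

lemma integral_cos_kernel (θ : ℝ) (n : ℕ) (hn : n ≠ 0) :
    ∫ t in (0 : ℝ)..θ, (θ - t) * Real.cos (n * t) = (1 - Real.cos (n * θ)) / n ^ 2 := by
  have hn' : (n : ℝ) ≠ 0 := by exact_mod_cast hn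
  have hd : ∀ t ∈ Set.uIcc 0 θ, HasDerivAt
      (fun t : ℝ => (θ - t) * (Real.sin (n * t) / n) - Real.cos (n * t) / n ^ 2)
      ((θ - t) * Real.cos (n * t)) t := by
    intro t _
    have h1 : HasDerivAt (fun t : ℝ => (n : ℝ) * t) n t := by
      simpa using (hasDerivAt_id t).const_mul (n : ℝ)
    have h2 := (((hasDerivAt_id t).const_sub θ).mul (h1.sin.div_const (n : ℝ))).sub
      (h1.cos.div_const ((n : ℝ) ^ 2))
    refine h2.congr_deriv ?_
    simp only [id]
    field_simp
    ring
  rw [intervalIntegral.integral_eq_sub_of_hasDerivAt hd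
    (Continuous.intervalIntegrable (by fun_prop) _ _)]
  simp
  ring

/-- The twice-integrated Fourier series, Abel-regularised by `rⁿ`. -/
lemma hasSum_abel {r θ : ℝ} (h0 : 0 ≤ r) (h1 : r < 1) (hθ : 0 ≤ θ) :
    HasSum (fun n : ℕ => r ^ n * ((1 - Real.cos (n * θ)) / n ^ 3))
      (∫ t in (0 : ℝ)..θ, (θ - t) * (-Real.log ‖1 - r * Complex.exp (t * Complex.I)‖)) := by
  have key := intervalIntegral.hasSum_integral_of_dominated_convergence
    (a := 0) (b := θ) (μ := volume)
    (F := fun (n : ℕ) (t : ℝ) => (θ - t) * (r ^ n * Real.cos (n * t) / n))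
    (f := fun t => (θ - t) * (-Real.log ‖1 - r * Complex.exp (t * Complex.I)‖))
    (fun n _ => θ * r ^ n)
    (fun n => (Continuous.aestronglyMeasurable (by fun_prop)))
    (fun n => Eventually.of_forall fun t ht => by
      rw [Set.uIoc_of_le hθ] at ht
      have hc := Real.abs_cos_le_one (n * t)
      have hr : 0 ≤ r ^ n := pow_nonneg h0 n
      rw [Real.norm_eq_abs, abs_mul, abs_div, abs_mul, abs_of_nonneg hr,
        abs_of_nonneg (by linarith [ht.2] : 0 ≤ θ - t)]
      have h3 : r ^ n * |Real.cos (n * t)| / |(n : ℝ)| ≤ r ^ n := by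
        rcases Nat.eq_zero_or_pos n with rfl | hn
        · simp
        · have : (1 : ℝ) ≤ n := by exact_mod_cast hn
          rw [abs_of_nonneg (by linarith : (0 : ℝ) ≤ n)]
          rw [div_le_iff₀ (by linarith)]
          exact mul_le_mul_of_nonneg_left (by linarith) hr
      exact mul_le_mul (by linarith [ht.1]) h3 (by positivity) hθ)
    (Eventually.of_forall fun t _ => (summable_geometric_of_lt_one h0 h1).mul_left θ)
    intervalIntegrable_const
    (Eventually.of_forall fun t _ => (re_log_series h0 h1 t).mul_left _)
  refine hasSum_of_eq key (fun n => ?_) rfl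
  rcases Nat.eq_zero_or_pos n with rfl | hn
  · simp
  · have h4 : ∀ t : ℝ, (θ - t) * (r ^ n * Real.cos (n * t) / n)
        = (r ^ n / n) * ((θ - t) * Real.cos (n * t)) := fun t => by ring
    simp_rw [h4]
    rw [intervalIntegral.integral_const_mul, integral_cos_kernel θ n hn.ne']
    have hn' : (n : ℝ) ≠ 0 := by exact_mod_cast hn.ne'
    field_simp

/-- A lower bound for `|1 - r e^{it}|` that is uniform in `r`, which keeps its logarithm dominated
near `t = 0`. -/
lemma norm_lower (r : ℝ) {t : ℝ} (ht : 0 < t) (ht2 : t ≤ π / 2) :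
    t / 2 ≤ ‖1 - r * Complex.exp (t * Complex.I)‖ := by
  have h1 : ‖1 - r * Complex.exp (t * Complex.I)‖
      = ‖Complex.exp ((-t : ℝ) * Complex.I) - r‖ := by
    have : Complex.exp ((-t : ℝ) * Complex.I) - r
        = Complex.exp ((-t : ℝ) * Complex.I) * (1 - r * Complex.exp (t * Complex.I)) := by
      rw [mul_sub, mul_one, mul_left_comm, ← Complex.exp_add]
      simp
    rw [this, norm_mul, Complex.norm_exp_ofReal_mul_I, one_mul]
  rw [h1]
  have h2 := Complex.abs_im_le_norm (Complex.exp ((-t : ℝ) * Complex.I) - r)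
  rw [Complex.sub_im, Complex.exp_ofReal_mul_I_im, Complex.ofReal_im, sub_zero, Real.sin_neg,
    abs_neg] at h2
  have h3 := Real.mul_le_sin ht.le ht2
  have h4 : t / 2 ≤ 2 / π * t := by
    rw [div_mul_eq_mul_div, div_le_div_iff₀ (by norm_num) Real.pi_pos]
    nlinarith [Real.pi_le_four]
  linarith [le_abs_self (Real.sin t)]

lemma norm_at_one {t : ℝ} (ht : 0 < t) (ht2 : t ≤ π / 2) :
    ‖1 - ((1 : ℝ) : ℂ) * Complex.exp (t * Complex.I)‖ = 2 * Real.sin (t / 2) := by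
  rw [Complex.ofReal_one, one_mul, norm_sub_rev, mul_comm,
    Complex.norm_exp_I_mul_ofReal_sub_one, Real.norm_eq_abs, abs_of_nonneg]
  have := Real.sin_nonneg_of_nonneg_of_le_pi (x := t / 2) (by linarith)
    (by linarith [Real.pi_pos])
  linarith

lemma abs_log_norm_le {r t : ℝ} (h0 : 0 ≤ r) (h1 : r ≤ 1) (ht : 0 < t) (ht2 : t ≤ π / 2) :
    |Real.log ‖1 - r * Complex.exp (t * Complex.I)‖| ≤ Real.log 2 + |Real.log t| := by
  have hl := norm_lower r ht ht2
  have hu : ‖1 - r * Complex.exp (t * Complex.I)‖ ≤ 2 := by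
    refine (norm_sub_le _ _).trans ?_
    rw [norm_mul, Complex.norm_exp_ofReal_mul_I, mul_one, Complex.norm_real, norm_one,
      Real.norm_eq_abs, abs_of_nonneg h0]
    linarith
  have h3 := Real.log_le_log (by positivity) hl
  have h4 := Real.log_le_log (by linarith) hu
  rw [Real.log_div ht.ne' (by norm_num)] at h3
  rw [abs_le]
  constructor
  · linarith [neg_abs_le (Real.log t)]
  · linarith [abs_nonneg (Real.log t)]

lemma intervalIntegrable_bound (θ : ℝ) :
    IntervalIntegrable (fun t => θ * (Real.log 2 + |Real.log t|)) volume 0 θ :=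
  (intervalIntegrable_const.add intervalIntegral.intervalIntegrable_log'.abs).const_mul θ

/-- The limit `r → 1` of `hasSum_abel`. -/
lemma tsum_one_sub_cos {θ : ℝ} (hθ : 0 < θ) (hθ2 : θ ≤ π / 2) :
    ∑' n : ℕ, (1 - Real.cos (n * θ)) / (n : ℝ) ^ 3
      = ∫ t in (0 : ℝ)..θ, (θ - t) * (-Real.log (2 * Real.sin (t / 2))) := by
  have hev : ∀ᶠ r : ℝ in 𝓝[<] 1, 0 ≤ r ∧ r < 1 := by
    have : Set.Ioo (0 : ℝ) 1 ∈ 𝓝[<] (1 : ℝ) := Ioo_mem_nhdsLT (by norm_num)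
    filter_upwards [this] with r hr using ⟨hr.1.le, hr.2⟩
  have hid : Tendsto (fun r : ℝ => r) (𝓝[<] 1) (𝓝 1) := tendsto_nhdsWithin_of_tendsto_nhds tendsto_id
  have hA : Tendsto (fun r : ℝ => ∑' n : ℕ, r ^ n * ((1 - Real.cos (n * θ)) / (n : ℝ) ^ 3))
      (𝓝[<] 1) (𝓝 (∑' n : ℕ, (1 - Real.cos (n * θ)) / (n : ℝ) ^ 3)) := by
    refine tendsto_tsum_of_dominated_convergence (bound := fun n : ℕ => 2 * (1 / (n : ℝ) ^ 3))
      ((Real.summable_one_div_nat_pow.mpr (by norm_num)).mul_left 2) ?_ ?_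
    · intro n
      simpa using (hid.pow n).mul_const ((1 - Real.cos (n * θ)) / (n : ℝ) ^ 3)
    · filter_upwards [hev] with r hr n
      have hc := Real.cos_le_one (n * θ)
      have hc2 := Real.neg_one_le_cos (n * θ)
      have hp : (0 : ℝ) ≤ 1 / (n : ℝ) ^ 3 := by positivity
      have hr1 : r ^ n ≤ 1 := pow_le_one₀ hr.1 hr.2.le
      have hr0 : 0 ≤ r ^ n := pow_nonneg hr.1 n
      rw [Real.norm_eq_abs, div_eq_mul_one_div, ← mul_assoc, abs_mul, abs_of_nonneg hp,
        abs_of_nonneg (mul_nonneg hr0 (by linarith))]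
      refine mul_le_mul_of_nonneg_right ?_ hp
      nlinarith
  have hB : Tendsto (fun r : ℝ =>
      ∫ t in (0 : ℝ)..θ, (θ - t) * (-Real.log ‖1 - r * Complex.exp (t * Complex.I)‖))
      (𝓝[<] 1) (𝓝 (∫ t in (0 : ℝ)..θ, (θ - t) * (-Real.log (2 * Real.sin (t / 2))))) := by
    refine intervalIntegral.tendsto_integral_filter_of_dominated_convergence
      (fun t => θ * (Real.log 2 + |Real.log t|)) ?_ ?_ (intervalIntegrable_bound θ) ?_
    · refine Eventually.of_forall fun r => Measurable.aestronglyMeasurable ?_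
      have : Measurable fun t : ℝ => ‖1 - (r : ℂ) * Complex.exp (t * Complex.I)‖ :=
        Continuous.measurable (by fun_prop)
      exact (measurable_const.sub measurable_id).mul (Real.measurable_log.comp this).neg
    · filter_upwards [hev] with r hr
      refine Eventually.of_forall fun t ht => ?_
      rw [Set.uIoc_of_le hθ.le] at ht
      rw [Real.norm_eq_abs, abs_mul, abs_neg, abs_of_nonneg (by linarith [ht.2] : 0 ≤ θ - t)]
      exact mul_le_mul (by linarith [ht.1]) (abs_log_norm_le hr.1 hr.2.le ht.1 (ht.2.trans hθ2))
        (abs_nonneg _) hθ.le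
    · refine Eventually.of_forall fun t ht => ?_
      rw [Set.uIoc_of_le hθ.le] at ht
      have ht2 := ht.2.trans hθ2
      rw [← norm_at_one ht.1 ht2]
      have hne : ‖1 - ((1 : ℝ) : ℂ) * Complex.exp (t * Complex.I)‖ ≠ 0 := by
        have := norm_lower 1 ht.1 ht2
        have := ht.1
        linarith
      have hc : Continuous fun r : ℝ => ‖1 - (r : ℂ) * Complex.exp (t * Complex.I)‖ := by fun_prop
      exact (((hc.tendsto 1).comp hid).log hne).neg.const_mul _
  refine tendsto_nhds_unique hA (hB.congr' ?_)
  filter_upwards [hev] with r hr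
  exact (hasSum_abel hr.1 hr.2 hθ.le).tsum_eq.symm

/-! ### Power series of the logarithm of the sine -/

lemma hasSum_log_sin_product {x : ℝ} (h0 : 0 < x) (h1 : x < 1) :
    HasSum (fun j : ℕ => -Real.log (1 - x ^ 2 / ((j : ℝ) + 1) ^ 2))
      (Real.log (π * x) - Real.log (Real.sin (π * x))) := by
  have hlt : ∀ j : ℕ, x ^ 2 / ((j : ℝ) + 1) ^ 2 < 1 := fun j => by
    rw [div_lt_one (by positivity)]
    have : (0 : ℝ) ≤ j := j.cast_nonneg
    nlinarith
  have hpos : ∀ j : ℕ, 0 < 1 - x ^ 2 / ((j : ℝ) + 1) ^ 2 := fun j => by linarith [hlt j]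
  have hπx : 0 < π * x := mul_pos Real.pi_pos h0
  have hs : 0 < Real.sin (π * x) :=
    Real.sin_pos_of_pos_of_lt_pi hπx (by nlinarith [Real.pi_pos])
  rw [hasSum_iff_tendsto_nat_of_nonneg]
  · have h := ((Real.tendsto_euler_sin_prod x).log hs.ne').const_sub (Real.log (π * x))
    refine h.congr fun n => ?_
    rw [Real.log_mul hπx.ne' (Finset.prod_ne_zero_iff.mpr fun j _ => (hpos j).ne'),
      Real.log_prod (fun j _ => (hpos j).ne'), Finset.sum_neg_distrib]
    ring
  · intro j
    have := Real.log_nonpos (hpos j).le (by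
      have : 0 ≤ x ^ 2 / ((j : ℝ) + 1) ^ 2 := by positivity
      linarith)
    linarith

lemma hasSum_log_sin_pi {x : ℝ} (h0 : 0 < x) (h1 : x < 1) :
    HasSum (fun k : ℕ => zetaR (2 * (k + 1)) / (k + 1) * x ^ (2 * (k + 1)))
      (Real.log (π * x) - Real.log (Real.sin (π * x))) := by
  set f : ℕ × ℕ → ℝ := fun p => (x ^ 2 / ((p.1 : ℝ) + 1) ^ 2) ^ (p.2 + 1) / ((p.2 : ℝ) + 1) with hf
  have hrow : ∀ j : ℕ, HasSum (fun k => f (j, k)) (-Real.log (1 - x ^ 2 / ((j : ℝ) + 1) ^ 2)) := by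
    intro j
    have hx : |x ^ 2 / ((j : ℝ) + 1) ^ 2| < 1 := by
      rw [abs_of_nonneg (by positivity), div_lt_one (by positivity)]
      have : (0 : ℝ) ≤ j := j.cast_nonneg
      nlinarith
    have hl := Real.hasSum_pow_div_log_of_abs_lt_one hx
    exact hasSum_of_eq hl (fun k => by simp only [hf]) rfl
  have hprod := hasSum_log_sin_product h0 h1
  have hsum : Summable f := by
    rw [summable_prod_of_nonneg (fun p => by positivity)]
    refine ⟨fun j => (hrow j).summable, ?_⟩
    simp_rw [fun j => (hrow j).tsum_eq]
    exact hprod.summable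
  have hval : HasSum f (Real.log (π * x) - Real.log (Real.sin (π * x))) := by
    have := hsum.hasSum.prod_fiberwise hrow
    rw [hprod.unique this]
    exact hsum.hasSum
  have hswap : HasSum (f ∘ Prod.swap) (Real.log (π * x) - Real.log (Real.sin (π * x))) :=
    (Equiv.prodComm ℕ ℕ).hasSum_iff.mpr hval
  refine hswap.prod_fiberwise fun k => ?_
  have hz := (zetaR_hasSum_succ (k := 2 * (k + 1)) (by omega)).mul_left
    (x ^ (2 * (k + 1)) / ((k : ℝ) + 1))
  refine hasSum_of_eq hz (fun j => ?_) ?_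
  · simp only [hf, Function.comp, Prod.swap]
    rw [div_pow, ← pow_mul, ← pow_mul]
    field_simp
  · push_cast
    ring

lemma hasSum_log_sin {t : ℝ} (h0 : 0 < t) (h1 : t < 2 * π) :
    HasSum (fun k : ℕ => zetaR (2 * (k + 1)) / (k + 1) * (t / (2 * π)) ^ (2 * (k + 1)))
      (Real.log t - Real.log (2 * Real.sin (t / 2))) := by
  have hπ := Real.pi_pos
  have h := hasSum_log_sin_pi (x := t / (2 * π)) (by positivity)
    (by rw [div_lt_one (by positivity)]; exact h1)
  have e : π * (t / (2 * π)) = t / 2 := by field_simp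
  have hs : 0 < Real.sin (t / 2) := Real.sin_pos_of_pos_of_lt_pi (by linarith) (by linarith)
  rw [e, Real.log_div h0.ne' two_ne_zero] at h
  rw [Real.log_mul two_ne_zero hs.ne']
  convert h using 1
  ring

/-! ### Evaluation of the integral -/

lemma integral_pow_kernel (θ : ℝ) (m : ℕ) :
    ∫ t in (0 : ℝ)..θ, (θ - t) * t ^ m = θ ^ (m + 2) / ((m + 1) * (m + 2)) := by
  have h : ∀ t : ℝ, (θ - t) * t ^ m = θ * t ^ m - t ^ (m + 1) := fun t => by ring
  simp_rw [h]
  rw [intervalIntegral.integral_sub (Continuous.intervalIntegrable (by fun_prop) _ _)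
    (Continuous.intervalIntegrable (by fun_prop) _ _), intervalIntegral.integral_const_mul,
    integral_pow, integral_pow]
  have h1 : (m : ℝ) + 1 ≠ 0 := by positivity
  have h2 : (m : ℝ) + 2 ≠ 0 := by positivity
  have h3 : (m : ℝ) + 1 + 1 ≠ 0 := by positivity
  push_cast
  rw [zero_pow (by omega), zero_pow (by omega)]
  field_simp
  ring

lemma intervalIntegrable_log_kernel (θ : ℝ) :
    IntervalIntegrable (fun t => (θ - t) * Real.log t) volume 0 θ :=
  intervalIntegral.intervalIntegrable_log'.continuousOn_mul
    (Continuous.continuousOn (by fun_prop))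

lemma integral_log_kernel {θ : ℝ} (hθ : 0 < θ) :
    ∫ t in (0 : ℝ)..θ, (θ - t) * Real.log t = θ ^ 2 / 2 * Real.log θ - 3 / 4 * θ ^ 2 := by
  have hc := Real.continuous_mul_log
  have hd : ∀ t ∈ Set.Ioo 0 θ, HasDerivAt
      (fun t : ℝ => θ * (t * Real.log t - t) - (t * (t * Real.log t) / 2 - t ^ 2 / 4))
      ((θ - t) * Real.log t) t := by
    intro t ht
    have hl := (hasDerivAt_id t).mul (Real.hasDerivAt_log ht.1.ne')
    have h2 := ((hl.sub (hasDerivAt_id t)).const_mul θ).sub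
      ((((hasDerivAt_id t).mul hl).div_const 2).sub (((hasDerivAt_id t).pow 2).div_const 4))
    refine h2.congr_deriv ?_
    have := ht.1.ne'
    simp
    field_simp
    ring
  rw [intervalIntegral.integral_eq_sub_of_hasDerivAt_of_le hθ.le
    (Continuous.continuousOn (by fun_prop)) hd (intervalIntegrable_log_kernel θ)]
  simp
  ring

lemma zetaR_nonneg (k : ℕ) : 0 ≤ zetaR (2 * (k + 1)) := by
  have h := zetaR_hasSum (k := 2 * (k + 1)) (by omega)
  push_cast at h
  exact h.nonneg fun n => by positivity

lemma integral_log_sin_kernel {θ : ℝ} (hθ : 0 < θ) (hθ2 : θ ≤ π / 2) :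
    ∫ t in (0 : ℝ)..θ, (θ - t) * (-Real.log (2 * Real.sin (t / 2)))
      = 3 / 4 * θ ^ 2 - θ ^ 2 / 2 * Real.log θ +
        ∑' k : ℕ, zetaR (2 * (k + 1)) / (k + 1) * (1 / (2 * π)) ^ (2 * (k + 1)) *
          (θ ^ (2 * (k + 1) + 2) / ((2 * (k + 1) + 1) * (2 * (k + 1) + 2))) := by
  have hπ := Real.pi_pos
  have key := intervalIntegral.hasSum_integral_of_dominated_convergence
    (a := 0) (b := θ) (μ := volume)
    (F := fun (k : ℕ) (t : ℝ) =>
      (θ - t) * (zetaR (2 * (k + 1)) / (k + 1) * (t / (2 * π)) ^ (2 * (k + 1))))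
    (f := fun t => (θ - t) * (Real.log t - Real.log (2 * Real.sin (t / 2))))
    (fun k _ => θ * (zetaR (2 * (k + 1)) / (k + 1) * (θ / (2 * π)) ^ (2 * (k + 1))))
    (fun k => (Continuous.aestronglyMeasurable (by fun_prop)))
    (fun k => Eventually.of_forall fun t ht => by
      rw [Set.uIoc_of_le hθ.le] at ht
      have hz := zetaR_nonneg k
      have ht0 := ht.1
      have ht1 : 0 ≤ θ - t := by linarith [ht.2]
      rw [Real.norm_eq_abs, abs_of_nonneg (by positivity)]
      have h1 : θ - t ≤ θ := by linarith
      have h2 := ht.2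
      gcongr)
    (Eventually.of_forall fun t _ => (hasSum_log_sin hθ (by linarith)).summable.mul_left θ)
    intervalIntegrable_const
    (Eventually.of_forall fun t ht => by
      rw [Set.uIoc_of_le hθ.le] at ht
      exact (hasSum_log_sin ht.1 (by linarith [ht.2])).mul_left _)
  have hterm : ∀ k : ℕ, ∫ t in (0 : ℝ)..θ,
      (θ - t) * (zetaR (2 * (k + 1)) / (k + 1) * (t / (2 * π)) ^ (2 * (k + 1)))
      = zetaR (2 * (k + 1)) / (k + 1) * (1 / (2 * π)) ^ (2 * (k + 1)) *
          (θ ^ (2 * (k + 1) + 2) / ((2 * (k + 1) + 1) * (2 * (k + 1) + 2))) := by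
    intro k
    have h4 : ∀ t : ℝ, (θ - t) * (zetaR (2 * (k + 1)) / (k + 1) * (t / (2 * π)) ^ (2 * (k + 1)))
        = (zetaR (2 * (k + 1)) / (k + 1) * (1 / (2 * π)) ^ (2 * (k + 1))) *
          ((θ - t) * t ^ (2 * (k + 1))) := fun t => by
      rw [div_eq_mul_one_div t, mul_pow]
      ring
    simp_rw [h4]
    rw [intervalIntegral.integral_const_mul, integral_pow_kernel]
    push_cast
    rfl
  simp_rw [hterm] at key
  rw [key.tsum_eq]
  have hint : IntervalIntegrable
      (fun t => (θ - t) * (-Real.log (2 * Real.sin (t / 2)))) volume 0 θ := by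
    refine (intervalIntegrable_bound θ).mono_fun ?_ ?_
    · refine Measurable.aestronglyMeasurable ?_
      have : Measurable fun t : ℝ => 2 * Real.sin (t / 2) := Continuous.measurable (by fun_prop)
      exact (measurable_const.sub measurable_id).mul (Real.measurable_log.comp this).neg
    · refine (ae_restrict_iff' measurableSet_uIoc).mpr (Eventually.of_forall fun t ht => ?_)
      rw [Set.uIoc_of_le hθ.le] at ht
      have ht2 := ht.2.trans hθ2
      beta_reduce
      rw [Real.norm_eq_abs, abs_mul, abs_neg, abs_of_nonneg (by linarith [ht.2] : 0 ≤ θ - t),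
        ← norm_at_one ht.1 ht2]
      refine le_trans ?_ (le_abs_self _)
      exact mul_le_mul (by linarith [ht.1]) (abs_log_norm_le zero_le_one le_rfl ht.1 ht2)
        (abs_nonneg _) hθ.le
  have hsplit : ∀ t : ℝ, (θ - t) * (Real.log t - Real.log (2 * Real.sin (t / 2)))
      = (θ - t) * Real.log t + (θ - t) * (-Real.log (2 * Real.sin (t / 2))) := fun t => by ring
  simp_rw [hsplit]
  rw [intervalIntegral.integral_add (intervalIntegrable_log_kernel θ) hint,
    integral_log_kernel hθ]
  ring

/-! ### The cosine series at `π / 3` -/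

lemma hasSum_dvd (d : ℕ) (hd : d ≠ 0) :
    HasSum (fun n : ℕ => if d ∣ n then 1 / (n : ℝ) ^ 3 else 0) (1 / (d : ℝ) ^ 3 * zetaR 3) := by
  have hinj : Function.Injective fun m : ℕ => d * m :=
    fun a b h => Nat.eq_of_mul_eq_mul_left (Nat.pos_of_ne_zero hd) h
  refine (hinj.hasSum_iff ?_).mp ?_
  · intro n hn
    rw [if_neg]
    rintro ⟨m, rfl⟩
    exact hn ⟨m, rfl⟩
  · have h := (zetaR_hasSum (k := 3) (by norm_num)).mul_left (1 / (d : ℝ) ^ 3)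
    push_cast at h
    refine hasSum_of_eq h (fun m => ?_) rfl
    simp only [Function.comp, dvd_mul_right, if_true]
    push_cast
    rw [mul_pow, one_div_mul_one_div]

lemma cos_nat_mul_pi_div_three (n : ℕ) :
    Real.cos (n * (π / 3)) = (1 - 2 * (if 2 ∣ n then 1 else 0) - 3 * (if 3 ∣ n then 1 else 0)
      + 6 * (if 6 ∣ n then 1 else 0)) / 2 := by
  have hq : (n : ℝ) * (π / 3) = (n % 6 : ℕ) * (π / 3) + (n / 6 : ℕ) * (2 * π) := by
    have : (n : ℝ) = (n % 6 : ℕ) + 6 * (n / 6 : ℕ) := by exact_mod_cast (Nat.mod_add_div n 6).symm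
    linear_combination (π / 3) * this
  have hlt : n % 6 < 6 := Nat.mod_lt _ (by norm_num)
  have h2 : 2 ∣ n ↔ 2 ∣ n % 6 := by omega
  have h3 : 3 ∣ n ↔ 3 ∣ n % 6 := by omega
  have h6 : 6 ∣ n ↔ 6 ∣ n % 6 := by omega
  rw [hq, Real.cos_add_nat_mul_two_pi]
  simp only [h2, h3, h6]
  generalize n % 6 = m at hlt
  have c2 : Real.cos (2 * (π / 3)) = -(1 / 2) := by
    rw [Real.cos_two_mul, Real.cos_pi_div_three]; norm_num
  have c3 : Real.cos (3 * (π / 3)) = -1 := by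
    rw [show 3 * (π / 3) = π by ring, Real.cos_pi]
  have c4 : Real.cos (4 * (π / 3)) = -(1 / 2) := by
    rw [show 4 * (π / 3) = π / 3 + π by ring, Real.cos_add_pi, Real.cos_pi_div_three]
  have c5 : Real.cos (5 * (π / 3)) = 1 / 2 := by
    rw [show 5 * (π / 3) = 2 * π - π / 3 by ring, Real.cos_two_pi_sub, Real.cos_pi_div_three]
  interval_cases m
  · norm_num
  · norm_num
  · norm_num [c2]
  · norm_num [c3]
  · norm_num [c4]
  · norm_num [c5]

lemma tsum_cos_pi_div_three :
    ∑' n : ℕ, (1 - Real.cos (n * (π / 3))) / (n : ℝ) ^ 3 = 2 / 3 * zetaR 3 := by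
  have h1 := hasSum_dvd 1 one_ne_zero
  have h2 := hasSum_dvd 2 two_ne_zero
  have h3 := hasSum_dvd 3 three_ne_zero
  have h6 := hasSum_dvd 6 (by norm_num)
  have h := ((h1.mul_left (1 / 2)).add (h2.mul_left 1)).add
    ((h3.mul_left (3 / 2)).add (h6.mul_left (-3)))
  simp_rw [cos_nat_mul_pi_div_three]
  refine HasSum.tsum_eq ?_
  refine hasSum_of_eq h (fun n => ?_) ?_
  · simp only [one_dvd, if_true]
    split_ifs <;> ring
  · push_cast
    ring

/-- `ζ(3) = π²/8 − (π²/12)·log(π/3) + (π²/3) ∑_{n=1}^∞ ζ(2n)/(2n(2n+1)(2n+2)) · (1/6)^{2n}`. -/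
theorem zeta3_clausen_one_sixth :
    zetaR 3 = π ^ 2 / 8 - π ^ 2 / 12 * Real.log (π / 3) +
      π ^ 2 / 3 * ∑' n : ℕ,
        zetaR (2 * (n + 1)) /
            (2 * (n + 1) * (2 * (n + 1) + 1) * (2 * (n + 1) + 2)) *
          (1 / 6 : ℝ) ^ (2 * (n + 1)) := by
  have hπ := Real.pi_pos
  have h := tsum_one_sub_cos (θ := π / 3) (by positivity) (by linarith)
  rw [tsum_cos_pi_div_three, integral_log_sin_kernel (by positivity) (by linarith)] at h
  have hterm : ∀ k : ℕ, zetaR (2 * (k + 1)) / (k + 1) * (1 / (2 * π)) ^ (2 * (k + 1)) *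
          ((π / 3) ^ (2 * (k + 1) + 2) / ((2 * (k + 1) + 1) * (2 * (k + 1) + 2)))
      = 2 * π ^ 2 / 9 * (zetaR (2 * (k + 1)) /
            (2 * (k + 1) * (2 * (k + 1) + 1) * (2 * (k + 1) + 2)) *
          (1 / 6 : ℝ) ^ (2 * (k + 1))) := by
    intro k
    have h6 : (1 / 6 : ℝ) = 1 / (2 * π) * (π / 3) := by
      field_simp
      norm_num
    rw [h6, mul_pow, pow_add (π / 3)]
    field_simp
    ring
  simp_rw [hterm] at h
  rw [tsum_mul_left] at h
  linarith
end

section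
/- Li₃(1/2) = (7/8)·ζ(3) + (1/6)·(log 2)³ − (π²/12)·log 2. -/
/-!
The value at `1/2` is the special case `z = 1/2` of Landen's identity
`Li₃(z) + Li₃(1-z) + Li₃(1-1/z) = ζ(3) + log³z/6 + (π²/6) log z - ½ log²z log(1-z)`,
because `1 - 1/z = -1` there and `Li₃(-1) = -(3/4) ζ(3)` (`polyLi_three_neg_one`).

On `[1/2, 1]` both sides are continuous and agree at `z = 1`, so it is enough to compare derivatives
on the open interval (`trilog_landen_half`). Since `Liₖ₊₁'(x) = Liₖ(x)/x` (`hasDerivAt_polyLi`),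
this comparison reduces to two dilogarithm identities, Landen's (`dilog_landen`) and Euler's
reflection formula (`dilog_reflection`). These follow by the same method from
`Li₂'(x) = -log(1-x)/x`, the constant in the reflection formula being `Li₂(1) = π²/6`.
-/

open Real

/-- The trilogarithm `Li₃(x) = ∑_{n=1}^∞ xⁿ/n³` for real `x`. -/
noncomputable def Li3 (x : ℝ) : ℝ := ∑' n : ℕ, x ^ (n + 1) / (n + 1) ^ 3

/-! ### Polylogarithm series: continuity and derivative -/

/-- The polylogarithm series `∑_{n ≥ 1} xⁿ / nᵏ`. -/
noncomputable def polyLi (k : ℕ) (x : ℝ) : ℝ := ∑' n : ℕ, x ^ (n + 1) / ((n : ℝ) + 1) ^ k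

lemma summable_inv_succ_pow {k : ℕ} (hk : 2 ≤ k) :
    Summable fun n : ℕ => 1 / ((n : ℝ) + 1) ^ k := by
  have h := (summable_nat_add_iff (f := fun n : ℕ => 1 / (n : ℝ) ^ k) 1).2
    (Real.summable_one_div_nat_pow.2 (by omega))
  simpa using h

lemma norm_polyLi_term_le (k n : ℕ) {x : ℝ} (hx : |x| ≤ 1) :
    ‖x ^ (n + 1) / ((n : ℝ) + 1) ^ k‖ ≤ 1 / ((n : ℝ) + 1) ^ k := by
  have h : (0 : ℝ) < ((n : ℝ) + 1) ^ k := by positivity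
  rw [norm_div, norm_pow, Real.norm_eq_abs, Real.norm_eq_abs, abs_of_pos h]
  gcongr
  exact pow_le_one₀ (abs_nonneg x) hx

lemma summable_polyLi {k : ℕ} (hk : 2 ≤ k) {x : ℝ} (hx : |x| ≤ 1) :
    Summable fun n : ℕ => x ^ (n + 1) / ((n : ℝ) + 1) ^ k :=
  Summable.of_norm_bounded (summable_inv_succ_pow hk) fun n => norm_polyLi_term_le k n hx

lemma continuousOn_polyLi {k : ℕ} (hk : 2 ≤ k) :
    ContinuousOn (polyLi k) (Set.Icc (-1) 1) := by
  unfold polyLi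
  refine continuousOn_tsum (fun n => ?_) (summable_inv_succ_pow hk)
    fun n x hx => norm_polyLi_term_le k n (abs_le.2 hx)
  fun_prop

lemma polyLi_zero (k : ℕ) : polyLi k 0 = 0 := by simp [polyLi]

lemma hasDerivAt_polyLi (k : ℕ) {x : ℝ} (hx : |x| < 1) (hx0 : x ≠ 0) :
    HasDerivAt (polyLi (k + 1)) (polyLi k x / x) x := by
  obtain ⟨r, hxr, hr1⟩ := exists_between hx
  have hr0 : 0 < r := (abs_nonneg x).trans_lt hxr
  have key := hasDerivAt_tsum_of_isPreconnected (𝕜 := ℝ) (F := ℝ) (u := fun n : ℕ => r ^ n)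
    (g := fun (n : ℕ) (y : ℝ) => y ^ (n + 1) / ((n : ℝ) + 1) ^ (k + 1))
    (g' := fun (n : ℕ) (y : ℝ) => y ^ n / ((n : ℝ) + 1) ^ k)
    (t := Set.Ioo (-r) r) (y₀ := 0) (y := x)
    (summable_geometric_of_lt_one hr0.le hr1) isOpen_Ioo isPreconnected_Ioo
    (fun n y _ => by
      have h := (hasDerivAt_pow (n + 1) y).div_const (((n : ℝ) + 1) ^ (k + 1))
      refine h.congr_deriv ?_
      have : (n : ℝ) + 1 ≠ 0 := by positivity
      push_cast
      field_simp
      ring)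
    (fun n y hy => by
      have h1 : (1 : ℝ) ≤ ((n : ℝ) + 1) ^ k := one_le_pow₀ (by linarith [n.cast_nonneg (α := ℝ)])
      have h0 : (0 : ℝ) < ((n : ℝ) + 1) ^ k := by positivity
      rw [norm_div, norm_pow, Real.norm_eq_abs, Real.norm_eq_abs, abs_of_pos h0]
      calc |y| ^ n / ((n : ℝ) + 1) ^ k ≤ |y| ^ n := div_le_self (by positivity) h1
        _ ≤ r ^ n := by gcongr; exact (abs_lt.2 hy).le)
    ⟨by linarith, hr0⟩ (by simp) (abs_lt.1 hxr)
  have he : polyLi k x / x = ∑' n : ℕ, x ^ n / ((n : ℝ) + 1) ^ k := by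
    rw [polyLi, ← tsum_div_const]
    congr 1 with n
    rw [pow_succ]
    field_simp
  rw [he]
  exact key

lemma polyLi_one {x : ℝ} (hx : |x| < 1) : polyLi 1 x = -log (1 - x) := by
  simpa [polyLi] using (Real.hasSum_pow_div_log_of_abs_lt_one hx).tsum_eq

lemma hasDerivAt_polyLi_two {x : ℝ} (hx : |x| < 1) (hx0 : x ≠ 0) :
    HasDerivAt (polyLi 2) (-log (1 - x) / x) x := by
  simpa [polyLi_one hx] using hasDerivAt_polyLi 1 hx hx0

/-! ### Special values at `1` and `-1` -/

lemma polyLi_two_one : polyLi 2 1 = π ^ 2 / 6 := by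
  have h := (hasSum_nat_add_iff' (f := fun n : ℕ => (1 : ℝ) / (n : ℝ) ^ 2) 1).2 hasSum_zeta_two
  simpa [polyLi] using h.tsum_eq

lemma polyLi_three_one : polyLi 3 1 = zetaR 3 := by
  have h : riemannZeta ((3 : ℝ) : ℂ) = ((∑' n : ℕ, 1 / (n : ℝ) ^ 3 : ℝ) : ℂ) := by
    have := zeta_nat_eq_tsum_of_gt_one (k := 3) (by norm_num)
    push_cast at this ⊢
    exact this
  rw [zetaR, h, Complex.ofReal_re,
    (Real.summable_one_div_nat_pow.2 (by norm_num : 1 < 3)).tsum_eq_zero_add]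
  simp [polyLi]

/-- In `Li₃(1) + Li₃(-1)` only the even-index terms survive, and they add up to `Li₃(1) / 4`. -/
lemma polyLi_three_neg_one : polyLi 3 (-1) = -(3 / 4) * polyLi 3 1 := by
  have s1 := summable_polyLi (k := 3) (by norm_num) (x := 1) (by simp)
  have s2 := summable_polyLi (k := 3) (by norm_num) (x := -1) (by simp)
  obtain ⟨f, hf⟩ : ∃ f : ℕ → ℝ, ∀ n, f n =
      1 ^ (n + 1) / ((n : ℝ) + 1) ^ 3 + (-1) ^ (n + 1) / ((n : ℝ) + 1) ^ 3 := ⟨_, fun _ => rfl⟩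
  have hs : Summable f := (s1.add s2).congr fun n => (hf n).symm
  have he : Function.Injective fun n : ℕ => 2 * n := fun a b h => by simpa using h
  have ho : Function.Injective fun n : ℕ => 2 * n + 1 := fun a b h => by simpa using h
  have hsplit := tsum_even_add_odd (f := f) (hs.comp_injective he) (hs.comp_injective ho)
  have hsum : ∑' n, f n = polyLi 3 1 + polyLi 3 (-1) := by
    rw [polyLi, polyLi, ← s1.tsum_add s2]
    exact tsum_congr hf
  have h0 : ∀ n : ℕ, f (2 * n) = 0 := fun n => by
    rw [hf, pow_succ (-1), pow_mul (-1)]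
    norm_num
    ring
  have h1 : ∀ n : ℕ, f (2 * n + 1) = 1 / 4 * (1 ^ (n + 1) / ((n : ℝ) + 1) ^ 3) := fun n => by
    rw [hf, show 2 * n + 1 + 1 = 2 * (n + 1) by ring, pow_mul (-1)]
    push_cast
    have : (n : ℝ) + 1 ≠ 0 := by positivity
    have h2 : (2 : ℝ) * n + 1 + 1 = 2 * (n + 1) := by ring
    rw [h2]
    field_simp
    norm_num
  simp only [h0, h1, tsum_zero, zero_add, tsum_mul_left] at hsplit
  change 1 / 4 * polyLi 3 1 = _ at hsplit
  linarith

/-! ### Continuity and differentiability on `[1/2, 1]` -/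

lemma eq_of_hasDerivAt_zero {f : ℝ → ℝ} {a b : ℝ} (hab : a < b)
    (hc : ContinuousOn f (Set.Icc a b)) (hd : ∀ x ∈ Set.Ioo a b, HasDerivAt f 0 x) :
    f a = f b := by
  obtain ⟨c, _, h⟩ := exists_hasDerivAt_eq_slope f (fun _ => 0) hab hc hd
  have : b - a ≠ 0 := by linarith
  field_simp at h
  linarith

/-- Although `log (1 - z)` blows up at `z = 1`, the zero of `log z` there compensates, since
`|log z| ≤ 2 (1 - z)` for `z ≥ 1/2`. -/
lemma continuousOn_log_mul_log :
    ContinuousOn (fun z => log z * log (1 - z)) (Set.Icc (1 / 2) 1) := by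
  intro z hz
  rcases hz.2.lt_or_eq with h | rfl
  · have h1 : z ≠ 0 := by linarith [hz.1]
    have h2 : 1 - z ≠ 0 := by linarith
    exact ContinuousAt.continuousWithinAt (by fun_prop (disch := assumption))
  · have hb : Filter.Tendsto (fun z : ℝ => 2 * |(1 - z) * log (1 - z)|)
        (nhdsWithin 1 (Set.Icc (1 / 2) 1)) (nhds 0) := by
      have hc : Continuous fun z : ℝ => 2 * |(1 - z) * log (1 - z)| :=
        continuous_const.mul (Real.continuous_mul_log.comp (continuous_const.sub continuous_id)).abs
      simpa using (hc.tendsto 1).mono_left nhdsWithin_le_nhds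
    rw [ContinuousWithinAt, log_one, zero_mul]
    refine squeeze_zero_norm' ?_ hb
    filter_upwards [self_mem_nhdsWithin] with z hz
    have hz0 : 0 < z := by linarith [hz.1]
    have h1 : |log z| ≤ 2 * (1 - z) := by
      rw [abs_of_nonpos (log_nonpos hz0.le hz.2)]
      have h := Real.one_sub_inv_le_log_of_pos hz0
      have : z⁻¹ - 1 ≤ 2 * (1 - z) := by
        rw [inv_eq_one_div, div_sub_one hz0.ne', div_le_iff₀ hz0]
        nlinarith [hz.1, hz.2]
      linarith
    rw [norm_mul, Real.norm_eq_abs, Real.norm_eq_abs, abs_mul,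
      abs_of_nonneg (by linarith [hz.2] : 0 ≤ 1 - z), ← mul_assoc]
    gcongr

lemma one_sub_inv_mem {z : ℝ} (hz : z ∈ Set.Icc (1 / 2 : ℝ) 1) :
    1 - z⁻¹ ∈ Set.Icc (-1 : ℝ) 1 := by
  have hz0 : 0 < z := by linarith [hz.1]
  have h1 : z⁻¹ ≤ 2 := by
    rw [inv_le_comm₀ hz0 two_pos]; linarith [hz.1]
  have h2 : 0 < z⁻¹ := inv_pos.2 hz0
  constructor <;> linarith

lemma one_sub_inv_abs {z : ℝ} (hz : z ∈ Set.Ioo (1 / 2 : ℝ) 1) :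
    |1 - z⁻¹| < 1 ∧ 1 - z⁻¹ ≠ 0 := by
  have hz0 : 0 < z := by linarith [hz.1]
  have h1 : z⁻¹ < 2 := by
    rw [inv_lt_comm₀ hz0 two_pos]; linarith [hz.1]
  have h2 : 1 < z⁻¹ := (one_lt_inv₀ hz0).2 hz.2
  exact ⟨abs_lt.2 ⟨by linarith, by linarith⟩, by linarith⟩

lemma continuousOn_polyLi_one_sub_inv {k : ℕ} (hk : 2 ≤ k) {a : ℝ} (ha : 1 / 2 ≤ a) :
    ContinuousOn (fun z : ℝ => polyLi k (1 - z⁻¹)) (Set.Icc a 1) := by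
  have ha' : ∀ z ∈ Set.Icc a 1, z ∈ Set.Icc (1 / 2 : ℝ) 1 := fun z hz => ⟨ha.trans hz.1, hz.2⟩
  refine (continuousOn_polyLi hk).comp ?_ fun z hz => one_sub_inv_mem (ha' z hz)
  exact continuousOn_const.sub (continuousOn_id.inv₀ fun z hz => by
    have := (ha' z hz).1
    simp only [id]; linarith)

lemma continuousOn_polyLi_one_sub {k : ℕ} (hk : 2 ≤ k) {a : ℝ} (ha : 1 / 2 ≤ a) :
    ContinuousOn (fun z : ℝ => polyLi k (1 - z)) (Set.Icc a 1) :=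
  (continuousOn_polyLi hk).comp (by fun_prop) fun z hz => by
    constructor <;> linarith [hz.1, hz.2]

lemma continuousOn_log_Icc {a : ℝ} (ha : 1 / 2 ≤ a) : ContinuousOn log (Set.Icc a 1) :=
  continuousOn_log.mono fun z hz => by
    have : 0 < z := by linarith [hz.1]
    exact this.ne'

lemma hasDerivAt_one_sub_inv {z : ℝ} (hz : z ≠ 0) :
    HasDerivAt (fun z : ℝ => 1 - z⁻¹) ((z ^ 2)⁻¹) z := by
  simpa using (hasDerivAt_inv hz).const_sub 1

lemma hasDerivAt_one_sub (z : ℝ) : HasDerivAt (fun z : ℝ => 1 - z) (-1) z := by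
  simpa using (hasDerivAt_id z).const_sub 1

/-! ### Functional equations -/

/-- Landen's identity for the dilogarithm. -/
lemma dilog_landen {z : ℝ} (hz : z ∈ Set.Ioo (1 / 2 : ℝ) 1) :
    polyLi 2 (1 - z) + polyLi 2 (1 - z⁻¹) = -(1 / 2) * log z ^ 2 := by
  have h := eq_of_hasDerivAt_zero
    (f := fun z => polyLi 2 (1 - z) + polyLi 2 (1 - z⁻¹) + 1 / 2 * log z ^ 2) hz.2
    (((continuousOn_polyLi_one_sub le_rfl hz.1.le).add
      (continuousOn_polyLi_one_sub_inv le_rfl hz.1.le)).add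
      (continuousOn_const.mul ((continuousOn_log_Icc hz.1.le).pow 2)))
    fun x hx => by
      have hx' : x ∈ Set.Ioo (1 / 2 : ℝ) 1 := ⟨hz.1.trans hx.1, hx.2⟩
      have hx0 : 0 < x := by linarith [hx'.1]
      have hx1 : 1 - x ≠ 0 := by linarith [hx'.2]
      obtain ⟨h1, h2⟩ := one_sub_inv_abs hx'
      have d1 := (hasDerivAt_polyLi_two (x := 1 - x)
        (abs_lt.2 ⟨by linarith [hx'.2], by linarith⟩) hx1).comp x (hasDerivAt_one_sub x)
      have d2 := (hasDerivAt_polyLi_two h1 h2).comp x (hasDerivAt_one_sub_inv hx0.ne')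
      have d3 := ((hasDerivAt_log hx0.ne').pow 2).const_mul (1 / 2)
      refine ((d1.add d2).add d3).congr_deriv ?_
      rw [sub_sub_cancel, sub_sub_cancel, log_inv]
      have h3 : x - 1 ≠ 0 := by linarith [hx'.2]
      have h4 : 1 - x⁻¹ = (x - 1) / x := by field_simp
      rw [h4]
      have h5 : 1 - x = -(x - 1) := by ring
      rw [h5]
      field_simp
      ring
  simp [polyLi_zero] at h
  linarith

/-- Euler's reflection formula for the dilogarithm. -/
lemma dilog_reflection {z : ℝ} (hz : z ∈ Set.Ioo (1 / 2 : ℝ) 1) :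
    polyLi 2 z + polyLi 2 (1 - z) = π ^ 2 / 6 - log z * log (1 - z) := by
  have h := eq_of_hasDerivAt_zero
    (f := fun z => polyLi 2 z + polyLi 2 (1 - z) + log z * log (1 - z)) hz.2
    ((((continuousOn_polyLi le_rfl).mono
        (Set.Icc_subset_Icc_left (by linarith [hz.1]))).add
      (continuousOn_polyLi_one_sub le_rfl hz.1.le)).add
      (continuousOn_log_mul_log.mono (Set.Icc_subset_Icc_left hz.1.le)))
    fun x hx => by
      have hx' : x ∈ Set.Ioo (1 / 2 : ℝ) 1 := ⟨hz.1.trans hx.1, hx.2⟩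
      have hx0 : 0 < x := by linarith [hx'.1]
      have hx1 : 1 - x ≠ 0 := by linarith [hx'.2]
      have d1 := hasDerivAt_polyLi_two (x := x)
        (abs_lt.2 ⟨by linarith, hx'.2⟩) hx0.ne'
      have d2 := (hasDerivAt_polyLi_two (x := 1 - x)
        (abs_lt.2 ⟨by linarith [hx'.2], by linarith⟩) hx1).comp x (hasDerivAt_one_sub x)
      have d3 := (hasDerivAt_log hx0.ne').mul
        ((hasDerivAt_log hx1).comp x (hasDerivAt_one_sub x))
      refine ((d1.add d2).add d3).congr_deriv ?_
      rw [sub_sub_cancel]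
      simp only [Function.comp]
      field_simp
      ring
  simp [polyLi_zero, polyLi_two_one] at h
  linarith

/-- Landen's three-term trilogarithm identity at `z = 1/2`: the difference of its two sides is
constant on `[1/2, 1]` and is evaluated at the endpoint `1`. -/
lemma trilog_landen_half :
    2 * polyLi 3 (1 / 2) + polyLi 3 (-1)
      = polyLi 3 1 + 1 / 3 * log 2 ^ 3 - π ^ 2 / 6 * log 2 := by
  have h := eq_of_hasDerivAt_zero (a := 1 / 2) (b := 1)
    (f := fun z => polyLi 3 z + polyLi 3 (1 - z) + polyLi 3 (1 - z⁻¹)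
      - 1 / 6 * log z ^ 3 - π ^ 2 / 6 * log z + 1 / 2 * (log z * (log z * log (1 - z))))
    (by norm_num)
    ((((((continuousOn_polyLi (by norm_num)).mono
        (Set.Icc_subset_Icc_left (by norm_num))).add
      (continuousOn_polyLi_one_sub (by norm_num) le_rfl)).add
      (continuousOn_polyLi_one_sub_inv (by norm_num) le_rfl)).sub
      (continuousOn_const.mul ((continuousOn_log_Icc le_rfl).pow 3))).sub
      (continuousOn_const.mul (continuousOn_log_Icc le_rfl)) |>.add
      (continuousOn_const.mul ((continuousOn_log_Icc le_rfl).mul continuousOn_log_mul_log)))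
    fun x hx => by
      have hx0 : 0 < x := by linarith [hx.1]
      have hx1 : 1 - x ≠ 0 := by linarith [hx.2]
      obtain ⟨h1, h2⟩ := one_sub_inv_abs hx
      have d1 := hasDerivAt_polyLi 2 (x := x)
        (abs_lt.2 ⟨by linarith, hx.2⟩) hx0.ne'
      have d2 := (hasDerivAt_polyLi 2 (x := 1 - x)
        (abs_lt.2 ⟨by linarith [hx.2], by linarith⟩) hx1).comp x (hasDerivAt_one_sub x)
      have d3 := (hasDerivAt_polyLi 2 h1 h2).comp x (hasDerivAt_one_sub_inv hx0.ne')
      have dl := hasDerivAt_log hx0.ne'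
      have d4 := (dl.pow 3).const_mul (1 / 6)
      have d5 := dl.const_mul (π ^ 2 / 6)
      have d6 := (dl.mul (dl.mul
        ((hasDerivAt_log hx1).comp x (hasDerivAt_one_sub x)))).const_mul (1 / 2)
      refine (((((d1.add d2).add d3).sub d4).sub d5).add d6).congr_deriv ?_
      have e1 : polyLi 2 (1 - x⁻¹) = -(1 / 2) * log x ^ 2 - polyLi 2 (1 - x) := by
        linarith [dilog_landen hx]
      have e2 : polyLi 2 x = π ^ 2 / 6 - log x * log (1 - x) - polyLi 2 (1 - x) := by
        linarith [dilog_reflection hx]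
      rw [e1, e2]
      have h3 : x - 1 ≠ 0 := by linarith [hx.2]
      have h4 : 1 - x⁻¹ = (x - 1) / x := by field_simp
      rw [h4]
      simp only [Function.comp, Pi.mul_apply]
      generalize log (1 - x) = M
      generalize polyLi 2 (1 - x) = P
      have h5 : 1 - x = -(x - 1) := by ring
      rw [h5]
      field_simp
      ring
  have e1 : (1 : ℝ) - 1 / 2 = 1 / 2 := by norm_num
  have e2 : (1 : ℝ) - (1 / 2)⁻¹ = -1 := by norm_num
  have e3 : log (1 / 2) = -log 2 := by rw [one_div, log_inv]
  simp only [e1, e2, e3, sub_self, inv_one, log_one, polyLi_zero] at h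
  linarith

/-- `Li₃(1/2) = (7/8)·ζ(3) + (1/6)·(log 2)³ − (π²/12)·log 2`. -/
theorem Li3_one_half :
    Li3 (1 / 2) = 7 / 8 * zetaR 3 + 1 / 6 * (Real.log 2) ^ 3 - π ^ 2 / 12 * Real.log 2 := by
  have h : Li3 (1 / 2) = polyLi 3 (1 / 2) := rfl
  have h1 := trilog_landen_half
  rw [polyLi_three_neg_one, polyLi_three_one] at h1
  rw [h]
  linarith
end
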